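/- arXiv:2510.27193 — 2 statements merged into one kernel-verified Lean document; each statement's English description precedes it below -/
import Mathlib

section
/- Let A be an invertible n×n real matrix such that no eigenvalue of A (viewed as a complex matrix) lies on the closed negative real axis (-∞, 0]. Then there exists an n×n real matrix X with exp(X) = A and such that every eigenvalue z of X (viewed as a complex matrix) satisfies -π < Im(z) < π. -/
open NormedSpace

/-!
Along the segment from `1` to `a`, the differential equation for `exp (-x t) * (1 + t (a - 1)) = 1`
gives the logarithm `x 1 = (a - 1) ∫₀¹ (1 + t (a - 1))⁻¹ dt`. The formula makes sense in every real
Banach algebra in which this segment consists of units, and continuous ring homomorphisms, such as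
complexification, commute with it. In `ℂ` it is the principal logarithm, so in a complex Banach
algebra every character `χ` of the bicommutant of `a` satisfies `χ (x 1) = log (χ a)`; by Gelfand
theory the spectrum of `x 1` is the image of that of `a` under `log`.
-/

open AffineMap Complex Set
open scoped Ring

section Algebra

theorem map_ringInverse_of_isUnit {M₀ N₀ F : Type*} [MonoidWithZero M₀] [MonoidWithZero N₀]
    [FunLike F M₀ N₀] [MonoidHomClass F M₀ N₀] (f : F) {x : M₀} (hx : IsUnit x) :
    f x⁻¹ʳ = (f x)⁻¹ʳ := by
  obtain ⟨u, rfl⟩ := hx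
  rw [Ring.inverse_unit]
  exact (Ring.inverse_unit (Units.map (f : M₀ →* N₀) u)).symm

instance isLocalHom_mapMatrix {n R S : Type*} [Fintype n] [DecidableEq n] [CommRing R]
    [CommRing S] (f : R →+* S) [IsLocalHom f] : IsLocalHom (f.mapMatrix (m := n)) where
  map_nonunit M hM := by
    rw [Matrix.isUnit_iff_isUnit_det] at hM ⊢
    rwa [← RingHom.map_det, isUnit_map_iff] at hM

theorem spectrum_apply_eq_of_isLocalHom {R A B F : Type*} [CommSemiring R] [Ring A] [Ring B]
    [Algebra R A] [Algebra R B] [FunLike F A B] [AlgHomClass F R A B] (f : F) [IsLocalHom f]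
    (a : A) : spectrum R (f a) = spectrum R a := by
  ext r
  rw [spectrum.mem_iff, spectrum.mem_iff, ← isUnit_map_iff f, map_sub, AlgHomClass.commutes]

theorem isUnit_of_mem_segment_one {𝕜 A : Type*} [Field 𝕜] [LinearOrder 𝕜]
    [IsStrictOrderedRing 𝕜] [Ring A] [Algebra 𝕜 A] {a u : A} (ha : spectrum 𝕜 a ⊆ Ioi 0)
    (hu : u ∈ segment 𝕜 1 a) : IsUnit u := by
  obtain ⟨s, t, hs, ht, hst, rfl⟩ := hu
  obtain rfl | ht := ht.eq_or_lt
  · simp_all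
  have hst : -(s / t) ∉ spectrum 𝕜 a := fun h =>
    (ha h).not_ge (neg_nonpos.2 (div_nonneg hs ht.le))
  rw [spectrum.notMem_iff] at hst
  convert hst.neg.smul (Units.mk0 t ht.ne') using 1
  simp [Units.smul_def, Algebra.algebraMap_eq_smul_one, smul_smul, mul_div_cancel₀ _ ht.ne',
    add_comm]

theorem isUnit_lineMap_one {𝕜 A : Type*} [Ring 𝕜] [PartialOrder 𝕜] [AddRightMono 𝕜] [Ring A]
    [Module 𝕜 A] {a : A} (ha : ∀ u ∈ segment 𝕜 1 a, IsUnit u) {t : 𝕜} (ht : t ∈ Icc 0 1) :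
    IsUnit (lineMap 1 a t) :=
  ha _ <| segment_eq_image_lineMap 𝕜 (1 : A) a ▸ mem_image_of_mem _ ht

theorem spectrum_real_subset_Ioi_of_subset_slitPlane {A : Type*} [Ring A] [Algebra ℝ A]
    [Algebra ℂ A] [IsScalarTower ℝ ℂ A] {a : A} (ha : spectrum ℂ a ⊆ slitPlane) :
    spectrum ℝ a ⊆ Ioi 0 := fun _ hr =>
  ofReal_mem_slitPlane.1 (ha ((spectrum.algebraMap_mem_iff ℂ).2 hr))

end Algebra

section Bicommutant

variable (𝕜 : Type*) {A : Type*}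

/-- The bicommutant of an element `a`: a commutative closed subalgebra containing `a`. Unlike
`Algebra.elemental 𝕜 a` it is closed under inverses, so that spectra can be computed in it. -/
abbrev bicommutant [CommSemiring 𝕜] [Semiring A] [Algebra 𝕜 A] (a : A) : Subalgebra 𝕜 A :=
  Subalgebra.centralizer 𝕜 (centralizer {a})

section Semiring

variable [CommSemiring 𝕜] [Semiring A] [Algebra 𝕜 A] (a : A)

theorem self_mem_bicommutant : a ∈ bicommutant 𝕜 a :=
  subset_centralizer_centralizer rfl

theorem bicommutant_mul_comm (x y : bicommutant 𝕜 a) : x * y = y * x :=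
  Subtype.ext <| centralizer_centralizer_comm_of_comm (by simp) _ x.2 _ y.2

instance isLocalHom_bicommutant_val : IsLocalHom (bicommutant 𝕜 a).val where
  map_nonunit x := by
    rintro ⟨u, hu⟩
    have hmem : (↑u⁻¹ : A) ∈ bicommutant 𝕜 a := fun c hc =>
      (show Commute c u from hu ▸ x.2 c hc).units_inv_right.eq
    have hmul : x * ⟨↑u⁻¹, hmem⟩ = 1 := Subtype.ext <| (congrArg (· * _) hu).symm.trans u.mul_inv
    exact ⟨⟨x, _, hmul, (bicommutant_mul_comm 𝕜 a _ x).trans hmul⟩, rfl⟩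

end Semiring

variable [NormedField 𝕜] [NormedRing A] [NormedAlgebra 𝕜 A] (a : A)

instance bicommutant.instNormedCommRing : NormedCommRing (bicommutant 𝕜 a) where
  mul_comm := bicommutant_mul_comm 𝕜 a

instance bicommutant.instCompleteSpace [CompleteSpace A] : CompleteSpace (bicommutant 𝕜 a) :=
  (isClosed_centralizer _).completeSpace_coe

end Bicommutant

section PrincipalLog

variable {A B : Type*} [NormedRing A] [NormedAlgebra ℝ A]

/-- The principal logarithm of an element `a` of a real Banach algebra, as an integral over the
segment from `1` to `a`. If this segment does not consist of units, the value is junk. -/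
noncomputable def principalLog (a : A) : A :=
  (a - 1) * ∫ t in (0 : ℝ)..1, (lineMap 1 a t)⁻¹ʳ

theorem principalLog_eq_log {z : ℂ} (hz : z ∈ slitPlane) : principalLog z = log z := by
  simpa [principalLog, lineMap_apply, add_comm] using
    (log_eq_integral (z := z - 1) (by simpa using hz)).symm

theorem isUnit_of_mem_segment_one_of_map [NormedRing B] [NormedAlgebra ℝ B] (f : A →+* B)
    [IsLocalHom f] (hf : Continuous f) {a : A} (ha : ∀ u ∈ segment ℝ 1 (f a), IsUnit u) :
    ∀ u ∈ segment ℝ 1 a, IsUnit u := by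
  rintro _ ⟨s, t, hs, ht, hst, rfl⟩
  exact (isUnit_map_iff f _).1 (ha _ ⟨s, t, hs, ht, hst, by simp [map_real_smul f hf]⟩)

variable [CompleteSpace A]

theorem continuousAt_ringInverse_lineMap {a b : A} {t : ℝ} (h : IsUnit (lineMap a b t)) :
    ContinuousAt (fun s : ℝ => (lineMap a b s)⁻¹ʳ) t := by
  obtain ⟨u, hu⟩ := h
  exact ContinuousAt.comp (hu ▸ NormedRing.inverse_continuousAt u) hasDerivAt_lineMap.continuousAt

theorem intervalIntegrable_ringInverse_lineMap {a : A} (ha : ∀ u ∈ segment ℝ 1 a, IsUnit u)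
    {t : ℝ} (ht : t ∈ Icc 0 1) :
    IntervalIntegrable (fun s : ℝ => (lineMap 1 a s)⁻¹ʳ) MeasureTheory.volume 0 t :=
  ContinuousOn.intervalIntegrable fun _ hs =>
    (continuousAt_ringInverse_lineMap <| isUnit_lineMap_one ha <|
      uIcc_subset_Icc (left_mem_Icc.2 zero_le_one) ht hs).continuousWithinAt

theorem hasDerivAt_integral_ringInverse_lineMap {a : A} (ha : ∀ u ∈ segment ℝ 1 a, IsUnit u)
    {t : ℝ} (ht : t ∈ Icc 0 1) :
    HasDerivAt (fun r => ∫ s in (0 : ℝ)..r, (lineMap 1 a s)⁻¹ʳ) (lineMap 1 a t)⁻¹ʳ t := by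
  have hopen : IsOpen {s : ℝ | IsUnit (lineMap 1 a s)} :=
    Units.isOpen.preimage (lineMap_continuous (p := (1 : A)) (q := a))
  have hunit := isUnit_lineMap_one ha ht
  exact intervalIntegral.integral_hasDerivAt_right (intervalIntegrable_ringInverse_lineMap ha ht)
    (ContinuousAt.stronglyMeasurableAtFilter hopen
      (fun _ => continuousAt_ringInverse_lineMap) t hunit)
    (continuousAt_ringInverse_lineMap hunit)

theorem map_principalLog [NormedRing B] [NormedAlgebra ℝ B] [CompleteSpace B] (f : A →+* B)
    (hf : Continuous f) {a : A} (ha : ∀ u ∈ segment ℝ 1 a, IsUnit u) :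
    f (principalLog a) = principalLog (f a) := by
  have hintegral := (f.toAddMonoidHom.toRealLinearMap hf).intervalIntegral_comp_comm
    (intervalIntegrable_ringInverse_lineMap ha (right_mem_Icc.2 zero_le_one))
  have hinverse : ∀ t ∈ uIcc (0 : ℝ) 1, f (lineMap 1 a t)⁻¹ʳ = (lineMap 1 (f a) t)⁻¹ʳ := by
    intro t ht
    rw [uIcc_of_le zero_le_one] at ht
    rw [map_ringInverse_of_isUnit f (isUnit_lineMap_one ha ht)]
    simp [lineMap_apply, map_real_smul f hf]
  rw [principalLog, principalLog, map_mul, map_sub, map_one]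
  exact congrArg _ (hintegral.symm.trans (intervalIntegral.integral_congr hinverse))

theorem exp_principalLog_of_comm {R : Type*} [NormedCommRing R] [NormedAlgebra ℝ R]
    [CompleteSpace R] {a : R} (ha : ∀ u ∈ segment ℝ 1 a, IsUnit u) :
    NormedSpace.exp (principalLog a) = a := by
  let _ : NormedAlgebra ℚ R := .restrictScalars ℚ ℝ R
  let x : ℝ → R := fun t => (a - 1) * ∫ s in (0 : ℝ)..t, (lineMap 1 a s)⁻¹ʳ
  let g : ℝ → R := fun t => NormedSpace.exp (-x t) * lineMap 1 a t
  have hg : ∀ t ∈ Icc (0 : ℝ) 1, HasDerivAt g 0 t := by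
    intro t ht
    have hx : HasDerivAt x ((a - 1) * (lineMap 1 a t)⁻¹ʳ) t :=
      (hasDerivAt_integral_ringInverse_lineMap ha ht).const_mul _
    have hexp := (hasFDerivAt_exp (𝕂 := ℝ) (x := -x t)).comp_hasDerivAt t hx.neg
    convert! hexp.mul (hasDerivAt_lineMap (a := (1 : R)) (b := a)) using 1
    simp [mul_assoc, Ring.inverse_mul_cancel _ (isUnit_lineMap_one ha ht)]
  have hconst : g 1 = g 0 :=
    constant_of_has_deriv_right_zero (fun t ht => (hg t ht).continuousAt.continuousWithinAt)
      (fun t ht => (hg t (Ico_subset_Icc_self ht)).hasDerivWithinAt) 1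
      (right_mem_Icc.2 zero_le_one)
  have hleft : NormedSpace.exp (-principalLog a) * a = 1 := by
    simpa [g, x, principalLog] using hconst
  have hright : NormedSpace.exp (principalLog a) * NormedSpace.exp (-principalLog a) = 1 := by
    rw [← NormedSpace.exp_add, add_neg_cancel, NormedSpace.exp_zero]
  exact left_inv_eq_right_inv hright hleft

theorem exp_principalLog {a : A} (ha : ∀ u ∈ segment ℝ 1 a, IsUnit u) :
    NormedSpace.exp (principalLog a) = a := by
  let _ : NormedAlgebra ℚ A := .restrictScalars ℚ ℝ A
  let C := bicommutant ℝ a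
  let _ : NormedAlgebra ℚ C := .restrictScalars ℚ ℝ C
  let c : C := ⟨a, self_mem_bicommutant ℝ a⟩
  let ι : C →+* A := C.val.toRingHom
  have hι : Continuous ι := continuous_subtype_val
  have : IsLocalHom ι := ⟨(isLocalHom_bicommutant_val ℝ a).map_nonunit⟩
  have hc : ∀ u ∈ segment ℝ 1 c, IsUnit u := isUnit_of_mem_segment_one_of_map ι hι ha
  calc NormedSpace.exp (principalLog a)
      = NormedSpace.exp (ι (principalLog c)) := by rw [map_principalLog ι hι hc]; rfl
    _ = ι c := by rw [← NormedSpace.map_exp ι hι, exp_principalLog_of_comm hc]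
    _ = a := rfl

end PrincipalLog

section Spectrum

theorem spectrum_principalLog_of_comm {R : Type*} [NormedCommRing R] [NormedAlgebra ℂ R]
    [CompleteSpace R] {a : R} (ha : spectrum ℂ a ⊆ slitPlane) :
    spectrum ℂ (principalLog a) = log '' spectrum ℂ a := by
  have hunits : ∀ u ∈ segment ℝ 1 a, IsUnit u := fun _ =>
    isUnit_of_mem_segment_one (spectrum_real_subset_Ioi_of_subset_slitPlane ha)
  have hχ (χ : WeakDual.characterSpace ℂ R) : χ (principalLog a) = log (χ a) := by
    rw [← principalLog_eq_log (ha (AlgHom.apply_mem_spectrum χ a))]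
    exact map_principalLog (χ : R →+* ℂ) (map_continuous χ) hunits
  ext z
  simp only [mem_image, WeakDual.CharacterSpace.mem_spectrum_iff_exists, hχ]
  exact ⟨fun ⟨χ, h⟩ => ⟨χ a, ⟨χ, rfl⟩, h⟩, fun ⟨_, ⟨χ, rfl⟩, h⟩ => ⟨χ, h⟩⟩

theorem spectrum_principalLog {A : Type*} [NormedRing A] [NormedAlgebra ℂ A] [CompleteSpace A]
    {a : A} (ha : spectrum ℂ a ⊆ slitPlane) :
    spectrum ℂ (principalLog a) = log '' spectrum ℂ a := by
  let C := bicommutant ℂ a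
  let c : C := ⟨a, self_mem_bicommutant ℂ a⟩
  have hspec : spectrum ℂ c = spectrum ℂ a := (spectrum_apply_eq_of_isLocalHom C.val c).symm
  have hc : spectrum ℂ c ⊆ slitPlane := hspec ▸ ha
  have hunits : ∀ u ∈ segment ℝ 1 c, IsUnit u := fun _ =>
    isUnit_of_mem_segment_one (spectrum_real_subset_Ioi_of_subset_slitPlane hc)
  have hlog : C.val (principalLog c) = principalLog a :=
    map_principalLog C.val.toRingHom continuous_subtype_val hunits
  rw [← hlog, spectrum_apply_eq_of_isLocalHom C.val, spectrum_principalLog_of_comm hc, hspec]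

end Spectrum

theorem real_principal_log_exists_general {A B : Type*} [NormedRing A] [NormedAlgebra ℝ A]
    [CompleteSpace A] [NormedRing B] [NormedAlgebra ℂ B] [CompleteSpace B] (ι : A →+* B)
    [IsLocalHom ι] (hι : Continuous ι) (a : A) (ha : spectrum ℂ (ι a) ⊆ slitPlane) :
    ∃ x : A, NormedSpace.exp x = a ∧
      ∀ z ∈ spectrum ℂ (ι x), -Real.pi < z.im ∧ z.im < Real.pi := by
  have hunits : ∀ u ∈ segment ℝ 1 a, IsUnit u :=
    isUnit_of_mem_segment_one_of_map ι hι fun _ =>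
      isUnit_of_mem_segment_one (spectrum_real_subset_Ioi_of_subset_slitPlane ha)
  refine ⟨principalLog a, exp_principalLog hunits, ?_⟩
  rw [map_principalLog ι hι hunits, spectrum_principalLog ha, forall_mem_image]
  intro w hw
  rw [log_im]
  exact ⟨neg_pi_lt_arg w, (arg_le_pi w).lt_of_ne (mem_slitPlane_iff_arg.1 (ha hw)).1⟩

/-- **Real principal logarithm.**
Let `A` be an invertible `n×n` real matrix such that no eigenvalue of `A` (viewed as a complex
matrix) lies on the closed negative real axis `(-∞, 0]`. Then there exists an `n×n` real matrix
`X` with `exp(X) = A` and such that every eigenvalue `z` of `X` (viewed as a complex matrix)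
satisfies `-π < Im z < π`. -/
theorem real_principal_log_exists (n : ℕ)
    (A : Matrix (Fin n) (Fin n) ℝ) (hA : IsUnit A)
    (hspec : ∀ μ ∈ spectrum ℂ (A.map (algebraMap ℝ ℂ)), ¬(μ.im = 0 ∧ μ.re ≤ 0)) :
    ∃ X : Matrix (Fin n) (Fin n) ℝ,
      NormedSpace.exp X = A ∧
        ∀ z ∈ spectrum ℂ (X.map (algebraMap ℝ ℂ)), -Real.pi < z.im ∧ z.im < Real.pi := by
  have hcont : Continuous ((algebraMap ℝ ℂ).mapMatrix (m := Fin n)) :=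
    continuous_id.matrix_map continuous_ofReal
  open scoped Matrix.Norms.Operator in
  refine real_principal_log_exists_general (algebraMap ℝ ℂ).mapMatrix hcont A fun μ hμ => ?_
  rw [mem_slitPlane_iff]
  by_contra! h
  exact hspec μ hμ h.symm
end

section
/- Let A : [0,1] → Matrix (Fin d) (Fin d) ℝ and e : [0,1] → ℝ^d be continuous, and let Φ : [0,1] → Matrix (Fin d) (Fin d) ℝ be differentiable with Φ(0) = I, Φ'(t) = A(t)·Φ(t), and Φ(t) invertible for every t ∈ [0,1]. Assume I - Φ(1) is invertible, and set M₁ := sup_{t ∈ [0,1]} ‖Φ(t)‖, M₂ := sup_{t ∈ [0,1]} ‖Φ(t)⁻¹‖, C₂ := ‖(I - Φ(1))⁻¹ Φ(1)‖. If z : [0,1] → ℝ^d is differentiable with z'(t) = A(t)z(t) + e(t) for all t and z(1) = z(0), then (∫₀¹ ‖z(t)‖² dt)^{1/2} ≤ M₁ C₂ M₂ ∫₀¹ ‖e(s)‖ ds + (M₁ M₂ / √2) (∫₀¹ ‖e(s)‖² ds)^{1/2}. -/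
open Matrix MeasureTheory intervalIntegral

attribute [local instance] Matrix.normedAddCommGroup Matrix.normedSpace

/-!
The inverse of the fundamental solution satisfies `(Φ⁻¹)' = -Φ⁻¹ A`, so `(Φ⁻¹ z)' = Φ⁻¹ e`, which
integrates to the variation of constants formula `z t = Φ t (z a + ∫ₐᵗ Φ⁻¹ e)`. Periodicity forces
`z a = (1 - Φ b)⁻¹ Φ b ∫ₐᵇ Φ⁻¹ e`, and Cauchy–Schwarz applied to `∫ₐᵗ ‖e‖` gives a pointwise bound
`‖z t‖ ≤ α + β √(t - a)`. By Minkowski's inequality the `L²` norm of the right-hand side is at most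
`√(b - a) α + (b - a) β / √2`.
-/

section L2

variable {X E : Type*} {mX : MeasurableSpace X} {μ : Measure X} [NormedAddCommGroup E]

lemma lpNorm_two_eq_sqrt_integral {f : X → E} (hf : AEStronglyMeasurable f μ) :
    lpNorm f 2 μ = √(∫ x, ‖f x‖ ^ 2 ∂μ) := by
  simp [lpNorm_eq_integral_norm_rpow_toReal two_ne_zero ENNReal.ofNat_ne_top hf,
    Real.sqrt_eq_rpow]

lemma integral_norm_le_sqrt_measureReal_mul_sqrt_integral [IsFiniteMeasure μ] {f : X → E}
    (hf : MemLp f 2 μ) :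
    ∫ x, ‖f x‖ ∂μ ≤ √(μ.real Set.univ) * √(∫ x, ‖f x‖ ^ 2 ∂μ) := by
  have holder : eLpNorm f 1 μ ≤ eLpNorm f 2 μ * μ Set.univ ^ (1 / 2 : ℝ) := by
    convert eLpNorm_le_eLpNorm_mul_rpow_measure_univ one_le_two hf.aestronglyMeasurable using 3
    norm_num
  have holder_real := ENNReal.toReal_mono
    (ENNReal.mul_ne_top hf.eLpNorm_ne_top (by finiteness)) holder
  rw [ENNReal.toReal_mul, ← ENNReal.toReal_rpow, toReal_eLpNorm hf.aestronglyMeasurable,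
    toReal_eLpNorm hf.aestronglyMeasurable, lpNorm_one_eq_integral_norm hf.aestronglyMeasurable,
    lpNorm_two_eq_sqrt_integral hf.aestronglyMeasurable, ← Real.sqrt_eq_rpow] at holder_real
  exact holder_real.trans_eq (mul_comm _ _)

lemma sqrt_integral_norm_sq_le_of_norm_le_add [IsFiniteMeasure μ] {f : X → E} {g : X → ℝ} {c : ℝ}
    (hc : 0 ≤ c) (hg : MemLp g 2 μ) (hfg : ∀ᵐ x ∂μ, ‖f x‖ ≤ c + g x) :
    √(∫ x, ‖f x‖ ^ 2 ∂μ) ≤ √(μ.real Set.univ) * c + √(∫ x, g x ^ 2 ∂μ) := by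
  have hc_memLp : MemLp (fun _ : X ↦ c) 2 μ := memLp_const c
  have hsum : MemLp (fun x ↦ c + g x) 2 μ := hc_memLp.add hg
  calc √(∫ x, ‖f x‖ ^ 2 ∂μ)
      ≤ √(∫ x, ‖c + g x‖ ^ 2 ∂μ) := by
        refine Real.sqrt_le_sqrt <| integral_mono_of_nonneg (.of_forall fun _ ↦ by positivity)
          (hsum.integrable_norm_pow two_ne_zero) ?_
        filter_upwards [hfg] with x hx
        exact pow_le_pow_left₀ (norm_nonneg _) (hx.trans (Real.le_norm_self _)) 2
    _ = lpNorm (fun x ↦ c + g x) 2 μ := (lpNorm_two_eq_sqrt_integral hsum.aestronglyMeasurable).symm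
    _ ≤ lpNorm (fun _ : X ↦ c) 2 μ + lpNorm g 2 μ := lpNorm_add_le hc_memLp one_le_two
    _ = √(μ.real Set.univ) * c + √(∫ x, g x ^ 2 ∂μ) := by
        simp [lpNorm_two_eq_sqrt_integral hc_memLp.aestronglyMeasurable,
          lpNorm_two_eq_sqrt_integral hg.aestronglyMeasurable, Real.sqrt_sq hc]

end L2

lemma norm_le_iSup_of_continuousOn {X F : Type*} [TopologicalSpace X] [SeminormedAddCommGroup F]
    {K : Set X} {f : X → F} (hK : IsCompact K) (hf : ContinuousOn f K) {x : X} (hx : x ∈ K) :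
    ‖f x‖ ≤ ⨆ y : K, ‖f y‖ := by
  have hbdd : BddAbove (Set.range fun y : K ↦ ‖f y‖) := by
    simpa only [Set.image_eq_range] using hK.bddAbove_image hf.norm
  exact le_ciSup hbdd ⟨x, hx⟩

section Interval

variable {E : Type*} [NormedAddCommGroup E] {a b : ℝ}

lemma memLp_restrict_Ioc_of_continuousOn {f : ℝ → E} (p : ENNReal)
    (hf : ContinuousOn f (Set.Icc a b)) : MemLp f p (volume.restrict (Set.Ioc a b)) :=
  .of_bound ((hf.mono Set.Ioc_subset_Icc_self).aestronglyMeasurable measurableSet_Ioc) _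
    (ae_restrict_of_forall_mem measurableSet_Ioc fun _ ht ↦
      norm_le_iSup_of_continuousOn isCompact_Icc hf (Set.Ioc_subset_Icc_self ht))

lemma intervalIntegral_norm_le_sqrt_mul_sqrt {f : ℝ → E} {t : ℝ} (ht : t ∈ Set.Icc a b)
    (hf : MemLp f 2 (volume.restrict (Set.Ioc a b))) :
    ∫ s in a..t, ‖f s‖ ≤ √(t - a) * √(∫ s in a..b, ‖f s‖ ^ 2) := by
  have hsub : Set.Ioc a t ⊆ Set.Ioc a b := Set.Ioc_subset_Ioc_right ht.2
  have hft := hf.mono_measure (Measure.restrict_mono_set volume hsub)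
  have hle : ∫ s in Set.Ioc a t, ‖f s‖ ^ 2 ≤ ∫ s in Set.Ioc a b, ‖f s‖ ^ 2 :=
    setIntegral_mono_set (hf.integrable_norm_pow two_ne_zero)
      (.of_forall fun _ ↦ by positivity) hsub.eventuallyLE
  rw [integral_of_le ht.1, integral_of_le (ht.1.trans ht.2)]
  calc ∫ s in Set.Ioc a t, ‖f s‖
      ≤ √(t - a) * √(∫ s in Set.Ioc a t, ‖f s‖ ^ 2) := by
        simpa [ht.1] using integral_norm_le_sqrt_measureReal_mul_sqrt_integral hft
    _ ≤ √(t - a) * √(∫ s in Set.Ioc a b, ‖f s‖ ^ 2) := by gcongr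

lemma sqrt_integral_norm_sq_le_of_norm_le_add_mul_sqrt {f : ℝ → E} {α β : ℝ} (hab : a ≤ b)
    (hα : 0 ≤ α) (hβ : 0 ≤ β) (hf : ∀ t ∈ Set.Icc a b, ‖f t‖ ≤ α + β * √(t - a)) :
    √(∫ t in a..b, ‖f t‖ ^ 2) ≤ √(b - a) * α + (b - a) * (β / √2) := by
  have hg : Continuous fun t ↦ β * √(t - a) := by fun_prop
  have hg_memLp : MemLp (fun t ↦ β * √(t - a)) 2 (volume.restrict (Set.Ioc a b)) :=
    memLp_restrict_Ioc_of_continuousOn 2 hg.continuousOn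
  have hg_norm : √(∫ t in a..b, (β * √(t - a)) ^ 2) = (b - a) * (β / √2) := by
    have hg_sq : ∫ t in a..b, (β * √(t - a)) ^ 2 = ((b - a) * β) ^ 2 / 2 :=
      calc ∫ t in a..b, (β * √(t - a)) ^ 2 = ∫ t in a..b, β ^ 2 * (t - a) := by
            refine integral_congr fun t ht ↦ ?_
            rw [Set.uIcc_of_le hab] at ht
            simp only [mul_pow, Real.sq_sqrt (sub_nonneg.2 ht.1)]
        _ = ((b - a) * β) ^ 2 / 2 := by
            rw [intervalIntegral.integral_const_mul, integral_comp_sub_right (fun x ↦ x),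
              integral_id]
            ring
    rw [hg_sq, Real.sqrt_div (by positivity),
      Real.sqrt_sq (mul_nonneg (sub_nonneg.2 hab) hβ), mul_div_assoc]
  have minkowski := sqrt_integral_norm_sq_le_of_norm_le_add hα hg_memLp <|
    ae_restrict_of_forall_mem measurableSet_Ioc fun t ht ↦ hf t (Set.Ioc_subset_Icc_self ht)
  rw [← integral_of_le hab, ← integral_of_le hab, hg_norm] at minkowski
  simpa [hab] using minkowski

lemma norm_intervalIntegral_clm_apply_le {F : Type*} [NormedAddCommGroup F] [NormedSpace ℝ E]
    [NormedSpace ℝ F] {T : ℝ → E →L[ℝ] F} {e : ℝ → E} {M : ℝ} (hab : a ≤ b)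
    (hT : ∀ s ∈ Set.Ioc a b, ‖T s‖ ≤ M) (he : IntervalIntegrable e volume a b) :
    ‖∫ s in a..b, T s (e s)‖ ≤ M * ∫ s in a..b, ‖e s‖ := by
  rw [← intervalIntegral.integral_const_mul]
  exact norm_integral_le_of_norm_le hab
    (.of_forall fun s hs ↦ (T s).le_of_opNorm_le (hT s hs) (e s)) (he.norm.const_mul M)

end Interval

lemma hasDerivWithinAt_ringInverse_comp {𝕜 R : Type*} [NontriviallyNormedField 𝕜] [NormedRing R]
    [HasSummableGeomSeries R] [NormedAlgebra 𝕜 R] {f : 𝕜 → R} {f' : R} {s : Set 𝕜} {t : 𝕜}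
    (hf : HasDerivWithinAt f f' s t) (hunit : IsUnit (f t)) :
    HasDerivWithinAt (fun x ↦ Ring.inverse (f x))
      (-(Ring.inverse (f t) * f' * Ring.inverse (f t))) s t := by
  obtain ⟨u, hu⟩ := hunit
  have hinv := hasFDerivAt_ringInverse (𝕜 := 𝕜) u
  rw [hu] at hinv
  simpa [← hu, Function.comp_def] using! hinv.comp_hasDerivWithinAt t hf

lemma map_ringInverse {F R S : Type*} [MonoidWithZero R] [MonoidWithZero S] [EquivLike F R S]
    [MulEquivClass F R S] (f : F) (x : R) :
    f (Ring.inverse x) = Ring.inverse (f x) := by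
  by_cases hx : IsUnit x
  · obtain ⟨u, rfl⟩ := hx
    simpa using (Ring.inverse_unit (Units.map (f : R →* S) u)).symm
  · rw [Ring.inverse_non_unit _ hx, Ring.inverse_non_unit _ ((MulEquiv.isUnit_map f).not.2 hx),
      map_zero]

/-- `Φ` is the fundamental solution on `[a, b]`, normalised at `a`, of the linear equation
`x' = A(t) x` in a normed space. Invertibility is a field because it does not follow from the other
two for discontinuous `A`: take `Φ t = (1 - t)²` and `A t = -2 / (1 - t)` on `[0, 1]`. -/
structure IsFundamentalSolution {E : Type*} [NormedAddCommGroup E] [NormedSpace ℝ E]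
    (A Φ : ℝ → E →L[ℝ] E) (a b : ℝ) : Prop where
  map_left : Φ a = 1
  hasDerivWithinAt : ∀ t ∈ Set.Icc a b, HasDerivWithinAt Φ (A t * Φ t) (Set.Icc a b) t
  isUnit : ∀ t ∈ Set.Icc a b, IsUnit (Φ t)

namespace IsFundamentalSolution

variable {E : Type*} [NormedAddCommGroup E] [NormedSpace ℝ E] {A Φ : ℝ → E →L[ℝ] E}
  {e z : ℝ → E} {a b t M₁ M₂ : ℝ}

lemma continuousOn (h : IsFundamentalSolution A Φ a b) : ContinuousOn Φ (Set.Icc a b) :=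
  fun t ht ↦ (h.hasDerivWithinAt t ht).continuousWithinAt

variable [CompleteSpace E]

lemma hasDerivWithinAt_ringInverse (h : IsFundamentalSolution A Φ a b) (ht : t ∈ Set.Icc a b) :
    HasDerivWithinAt (fun s ↦ Ring.inverse (Φ s)) (-(Ring.inverse (Φ t) * A t))
      (Set.Icc a b) t := by
  have hderiv := hasDerivWithinAt_ringInverse_comp (h.hasDerivWithinAt t ht) (h.isUnit t ht)
  rwa [mul_assoc, mul_assoc, Ring.mul_inverse_cancel _ (h.isUnit t ht), mul_one] at hderiv

lemma continuousOn_ringInverse (h : IsFundamentalSolution A Φ a b) :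
    ContinuousOn (fun s ↦ Ring.inverse (Φ s)) (Set.Icc a b) :=
  fun _ ht ↦ (h.hasDerivWithinAt_ringInverse ht).continuousWithinAt

lemma hasDerivWithinAt_ringInverse_apply (h : IsFundamentalSolution A Φ a b)
    (ht : t ∈ Set.Icc a b) (hz : HasDerivWithinAt z (A t (z t) + e t) (Set.Icc a b) t) :
    HasDerivWithinAt (fun s ↦ Ring.inverse (Φ s) (z s)) (Ring.inverse (Φ t) (e t))
      (Set.Icc a b) t := by
  simpa using (h.hasDerivWithinAt_ringInverse ht).clm_apply hz

lemma intervalIntegrable_ringInverse_apply (h : IsFundamentalSolution A Φ a b)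
    (ht : t ∈ Set.Icc a b) (he : IntervalIntegrable e volume a t) :
    IntervalIntegrable (fun s ↦ Ring.inverse (Φ s) (e s)) volume a t := by
  have hsub : Set.Ioc a t ⊆ Set.Icc a b :=
    Set.Ioc_subset_Icc_self.trans (Set.Icc_subset_Icc_right ht.2)
  rw [intervalIntegrable_iff_integrableOn_Ioc_of_le ht.1] at he ⊢
  exact (ContinuousLinearMap.id ℝ (E →L[ℝ] E)).integrable_of_bilin_of_bdd_left _
    ((h.continuousOn_ringInverse.mono hsub).aestronglyMeasurable measurableSet_Ioc)
    (ae_restrict_of_forall_mem measurableSet_Ioc fun s hs ↦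
      norm_le_iSup_of_continuousOn isCompact_Icc h.continuousOn_ringInverse (hsub hs)) he

theorem variation_of_constants (h : IsFundamentalSolution A Φ a b)
    (hz : ∀ t ∈ Set.Icc a b, HasDerivWithinAt z (A t (z t) + e t) (Set.Icc a b) t)
    (ht : t ∈ Set.Icc a b) (he : IntervalIntegrable e volume a t) :
    z t = Φ t (z a + ∫ s in a..t, Ring.inverse (Φ s) (e s)) := by
  have hderiv (s : ℝ) (hs : s ∈ Set.Icc a b) :=
    h.hasDerivWithinAt_ringInverse_apply hs (hz s hs)
  have hftc : ∫ s in a..t, Ring.inverse (Φ s) (e s)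
      = Ring.inverse (Φ t) (z t) - Ring.inverse (Φ a) (z a) := by
    refine integral_eq_sub_of_hasDerivAt_of_le (f := fun s ↦ Ring.inverse (Φ s) (z s)) ht.1 ?_
      (fun s hs ↦ ?_) (h.intervalIntegrable_ringInverse_apply ht he)
    · exact fun s hs ↦ (hderiv s ⟨hs.1, hs.2.trans ht.2⟩).continuousWithinAt.mono
        (Set.Icc_subset_Icc_right ht.2)
    · exact (hderiv s ⟨hs.1.le, hs.2.le.trans ht.2⟩).hasDerivAt
        (Icc_mem_nhds hs.1 (hs.2.trans_le ht.2))
  rw [hftc, h.map_left, Ring.inverse_one, one_apply_eq_self, add_sub_cancel,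
    ← mul_apply_eq_comp, Ring.mul_inverse_cancel _ (h.isUnit t ht),
    one_apply_eq_self]

lemma initial_value_eq_of_periodic (h : IsFundamentalSolution A Φ a b) (hab : a ≤ b)
    (hmono : IsUnit (1 - Φ b)) (he : IntervalIntegrable e volume a b)
    (hz : ∀ t ∈ Set.Icc a b, HasDerivWithinAt z (A t (z t) + e t) (Set.Icc a b) t)
    (hper : z b = z a) :
    z a = (Ring.inverse (1 - Φ b) * Φ b) (∫ s in a..b, Ring.inverse (Φ s) (e s)) := by
  set I := ∫ s in a..b, Ring.inverse (Φ s) (e s)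
  have hfixed : z a = Φ b (z a + I) :=
    hper.symm.trans (h.variation_of_constants hz (Set.right_mem_Icc.2 hab) he)
  have hmonodromy : (1 - Φ b) (z a) = Φ b I := by
    rw [map_add] at hfixed
    simpa [sub_eq_iff_eq_add'] using hfixed
  rw [mul_apply_eq_comp, ← hmonodromy, ← mul_apply_eq_comp,
    Ring.inverse_mul_cancel _ hmono, one_apply_eq_self]

lemma norm_le_of_periodic (h : IsFundamentalSolution A Φ a b) (hmono : IsUnit (1 - Φ b))
    (hM₁ : ∀ t ∈ Set.Icc a b, ‖Φ t‖ ≤ M₁)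
    (hM₂ : ∀ t ∈ Set.Icc a b, ‖Ring.inverse (Φ t)‖ ≤ M₂)
    (he : IntervalIntegrable e volume a b)
    (hz : ∀ t ∈ Set.Icc a b, HasDerivWithinAt z (A t (z t) + e t) (Set.Icc a b) t)
    (hper : z b = z a) (ht : t ∈ Set.Icc a b) :
    ‖z t‖ ≤ M₁ * ‖Ring.inverse (1 - Φ b) * Φ b‖ * M₂ * (∫ s in a..b, ‖e s‖)
      + M₁ * M₂ * ∫ s in a..t, ‖e s‖ := by
  set K := Ring.inverse (1 - Φ b) * Φ b
  have hM₁_nonneg : 0 ≤ M₁ := (norm_nonneg _).trans (hM₁ t ht)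
  have he_on (s : ℝ) (hs : s ∈ Set.Icc a b) : IntervalIntegrable e volume a s :=
    he.mono_set <| by
      simpa only [Set.uIcc_of_le hs.1, Set.uIcc_of_le (hs.1.trans hs.2)]
        using Set.Icc_subset_Icc_right hs.2
  have hint (s : ℝ) (hs : s ∈ Set.Icc a b) :
      ‖∫ r in a..s, Ring.inverse (Φ r) (e r)‖ ≤ M₂ * ∫ r in a..s, ‖e r‖ :=
    norm_intervalIntegral_clm_apply_le hs.1 (fun r hr ↦ hM₂ r ⟨hr.1.le, hr.2.trans hs.2⟩)
      (he_on s hs)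
  have hab : a ≤ b := ht.1.trans ht.2
  have hza : ‖z a‖ ≤ ‖K‖ * (M₂ * ∫ s in a..b, ‖e s‖) := by
    rw [h.initial_value_eq_of_periodic hab hmono he hz hper]
    exact K.le_opNorm_of_le (hint b (Set.right_mem_Icc.2 hab))
  calc ‖z t‖ = ‖Φ t (z a + ∫ s in a..t, Ring.inverse (Φ s) (e s))‖ :=
        congrArg norm (h.variation_of_constants hz ht (he_on t ht))
    _ ≤ M₁ * ‖z a + ∫ s in a..t, Ring.inverse (Φ s) (e s)‖ :=
        (Φ t).le_of_opNorm_le (hM₁ t ht) _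
    _ ≤ M₁ * (‖K‖ * (M₂ * ∫ s in a..b, ‖e s‖) + M₂ * ∫ s in a..t, ‖e s‖) := by
        gcongr
        exact (norm_add_le _ _).trans (add_le_add hza (hint t ht))
    _ = M₁ * ‖K‖ * M₂ * (∫ s in a..b, ‖e s‖) + M₁ * M₂ * ∫ s in a..t, ‖e s‖ := by ring

lemma of_matrix {n : Type*} [Fintype n] [DecidableEq n] {A Φ : ℝ → Matrix n n ℝ}
    (hΦa : Φ a = 1)
    (hΦ : ∀ t ∈ Set.Icc a b, HasDerivWithinAt Φ (A t * Φ t) (Set.Icc a b) t)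
    (hΦunit : ∀ t ∈ Set.Icc a b, IsUnit (Φ t)) :
    IsFundamentalSolution (fun t ↦ toEuclideanCLM (𝕜 := ℝ) (A t))
      (fun t ↦ toEuclideanCLM (𝕜 := ℝ) (Φ t)) a b where
  map_left := by rw [hΦa, map_one]
  hasDerivWithinAt t ht := by
    let L : Matrix n n ℝ →L[ℝ] EuclideanSpace ℝ n →L[ℝ] EuclideanSpace ℝ n :=
      LinearMap.toContinuousLinearMap (toEuclideanCLM (n := n) (𝕜 := ℝ)).toAlgEquiv.toLinearMap
    rw [← map_mul]
    exact L.hasFDerivAt.comp_hasDerivWithinAt t (hΦ t ht)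
  isUnit t ht := (hΦunit t ht).map (toEuclideanCLM (n := n) (𝕜 := ℝ))

end IsFundamentalSolution

theorem periodic_solution_L2_bound_general {E : Type*} [NormedAddCommGroup E] [NormedSpace ℝ E]
    [CompleteSpace E] {A Φ : ℝ → E →L[ℝ] E} {e z : ℝ → E} {a b M₁ M₂ : ℝ} (hab : a ≤ b)
    (hΦ : IsFundamentalSolution A Φ a b) (hmono : IsUnit (1 - Φ b))
    (hM₁ : ∀ t ∈ Set.Icc a b, ‖Φ t‖ ≤ M₁)
    (hM₂ : ∀ t ∈ Set.Icc a b, ‖Ring.inverse (Φ t)‖ ≤ M₂)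
    (he : MemLp e 2 (volume.restrict (Set.Ioc a b)))
    (hz : ∀ t ∈ Set.Icc a b, HasDerivWithinAt z (A t (z t) + e t) (Set.Icc a b) t)
    (hper : z b = z a) :
    √(∫ t in a..b, ‖z t‖ ^ 2)
      ≤ √(b - a) * (M₁ * ‖Ring.inverse (1 - Φ b) * Φ b‖ * M₂ * ∫ s in a..b, ‖e s‖)
        + (b - a) * (M₁ * M₂ / √2 * √(∫ s in a..b, ‖e s‖ ^ 2)) := by
  have ha : a ∈ Set.Icc a b := Set.left_mem_Icc.2 hab
  have hM₁_nonneg : 0 ≤ M₁ := (norm_nonneg _).trans (hM₁ a ha)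
  have hM₂_nonneg : 0 ≤ M₂ := (norm_nonneg _).trans (hM₂ a ha)
  have he_int : IntervalIntegrable e volume a b :=
    (intervalIntegrable_iff_integrableOn_Ioc_of_le hab).2 (he.integrable one_le_two)
  have he_nonneg : 0 ≤ ∫ s in a..b, ‖e s‖ := integral_nonneg hab fun _ _ ↦ norm_nonneg _
  rw [div_mul_eq_mul_div]
  refine sqrt_integral_norm_sq_le_of_norm_le_add_mul_sqrt hab (by positivity) (by positivity)
    fun t ht ↦ (hΦ.norm_le_of_periodic hmono hM₁ hM₂ he_int hz hper ht).trans ?_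
  rw [mul_assoc (M₁ * M₂), mul_comm (√_)]
  gcongr
  exact intervalIntegral_norm_le_sqrt_mul_sqrt ht he

/-- **`L²` bound on a periodic solution of a perturbed linear system.**
Let `A : [0,1] → Matrix (Fin d) (Fin d) ℝ` and `e : [0,1] → ℝ^d` be continuous and let `Φ` be
the fundamental solution of `ẋ = A(t)x` (`Φ(0) = I`, `Φ' = AΦ`, each `Φ(t)` invertible) with
`I - Φ(1)` invertible. Set `M₁ := sup ‖Φ(t)‖`, `M₂ := sup ‖Φ(t)⁻¹‖`,
`C₂ := ‖(I - Φ(1))⁻¹Φ(1)‖`. If `z' = A(t)z + e(t)` on `[0,1]` and `z(1) = z(0)`, then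
`(∫₀¹‖z‖²)^{1/2} ≤ M₁C₂M₂ ∫₀¹‖e‖ + (M₁M₂/√2)(∫₀¹‖e‖²)^{1/2}`. -/
theorem periodic_solution_L2_bound (d : ℕ)
    (A : ℝ → Matrix (Fin d) (Fin d) ℝ)
    (e : ℝ → EuclideanSpace ℝ (Fin d))
    (Φ : ℝ → Matrix (Fin d) (Fin d) ℝ)
    (hA : ContinuousOn A (Set.Icc 0 1))
    (he : ContinuousOn e (Set.Icc 0 1))
    (hΦ0 : Φ 0 = 1)
    (hΦ : ∀ t ∈ Set.Icc (0:ℝ) 1, HasDerivWithinAt Φ (A t * Φ t) (Set.Icc 0 1) t)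
    (hΦinv : ∀ t ∈ Set.Icc (0:ℝ) 1, IsUnit (Φ t))
    (hmono : IsUnit ((1 : Matrix (Fin d) (Fin d) ℝ) - Φ 1))
    (M₁ M₂ C₂ : ℝ)
    (hM₁ : M₁ = ⨆ t : Set.Icc (0:ℝ) 1, ‖Matrix.toEuclideanCLM (𝕜 := ℝ) (Φ (t : ℝ))‖)
    (hM₂ : M₂ = ⨆ t : Set.Icc (0:ℝ) 1, ‖Matrix.toEuclideanCLM (𝕜 := ℝ) ((Φ (t : ℝ))⁻¹)‖)
    (hC₂ : C₂ = ‖Matrix.toEuclideanCLM (𝕜 := ℝ) ((1 - Φ 1)⁻¹ * Φ 1)‖)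
    (z : ℝ → EuclideanSpace ℝ (Fin d))
    (hz : ∀ t ∈ Set.Icc (0:ℝ) 1, HasDerivWithinAt z
      (Matrix.toEuclideanCLM (𝕜 := ℝ) (A t) (z t) + e t) (Set.Icc 0 1) t)
    (hper : z 1 = z 0) :
    Real.sqrt (∫ t in (0:ℝ)..1, ‖z t‖ ^ 2)
      ≤ M₁ * C₂ * M₂ * (∫ s in (0:ℝ)..1, ‖e s‖)
        + (M₁ * M₂ / Real.sqrt 2) * Real.sqrt (∫ s in (0:ℝ)..1, ‖e s‖ ^ 2) := by
  have hF := IsFundamentalSolution.of_matrix hΦ0 hΦ hΦinv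
  have hmonoF : IsUnit (1 - toEuclideanCLM (𝕜 := ℝ) (Φ 1)) := by
    simpa using hmono.map (toEuclideanCLM (n := Fin d) (𝕜 := ℝ))
  simp only [nonsing_inv_eq_ringInverse, map_mul, map_ringInverse, map_sub, map_one] at hM₂ hC₂
  simpa [hC₂] using periodic_solution_L2_bound_general zero_le_one hF hmonoF
    (hM₁ ▸ fun _ ↦ norm_le_iSup_of_continuousOn isCompact_Icc hF.continuousOn)
    (hM₂ ▸ fun _ ↦ norm_le_iSup_of_continuousOn isCompact_Icc hF.continuousOn_ringInverse)
    (memLp_restrict_Ioc_of_continuousOn 2 he) hz hper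
end
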